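/- Let R be an associative ring with unity. If the class of flat left R-modules is λ-categorical in some cardinal λ > card(R) + ℵ₀, then every countably generated flat left R-module is projective (and hence R is left perfect). -/

import Mathlib

/-! Statement 10: if the class of flat left `R`-modules is categorical in some cardinal
`> card R + ℵ₀`, then every countably generated flat left `R`-module is projective, and
hence `R` is left perfect (every flat left `R`-module is projective).  Since this version
of Mathlib only has flatness over commutative rings, we define the balanced tensor
product of a right module and a left module over an arbitrary ring and flatness via it. -/

universe u

open Cardinal TensorProduct

variable (R : Type u) [Ring R]

/-- The subgroup of `A ⊗[ℤ] M` by which one quotients to obtain the balanced tensor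
product `A ⊗[R] M` of a right `R`-module `A` and a left `R`-module `M`. -/
noncomputable def balancedRel (A : Type u) [AddCommGroup A] [Module Rᵐᵒᵖ A]
    (M : Type u) [AddCommGroup M] [Module R M] : AddSubgroup (A ⊗[ℤ] M) :=
  AddSubgroup.closure
    {x | ∃ (a : A) (r : R) (m : M),
      x = (MulOpposite.op r • a) ⊗ₜ[ℤ] m - a ⊗ₜ[ℤ] (r • m)}

/-- The balanced tensor product `A ⊗[R] M` of a right `R`-module `A` and a left
`R`-module `M`, as an abelian group. -/
noncomputable def BalancedTensor (A : Type u) [AddCommGroup A] [Module Rᵐᵒᵖ A]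
    (M : Type u) [AddCommGroup M] [Module R M] : Type u :=
  (A ⊗[ℤ] M) ⧸ balancedRel R A M

noncomputable instance (A : Type u) [AddCommGroup A] [Module Rᵐᵒᵖ A]
    (M : Type u) [AddCommGroup M] [Module R M] :
    AddCommGroup (BalancedTensor R A M) :=
  QuotientAddGroup.Quotient.addCommGroup _

/-- The map `A ⊗[R] M → B ⊗[R] M` induced on balanced tensor products by a map
`f : A → B` of right `R`-modules. -/
noncomputable def tensorMap {A B : Type u} [AddCommGroup A] [Module Rᵐᵒᵖ A]
    [AddCommGroup B] [Module Rᵐᵒᵖ B] (M : Type u) [AddCommGroup M] [Module R M]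
    (f : A →ₗ[Rᵐᵒᵖ] B) : BalancedTensor R A M →+ BalancedTensor R B M :=
  QuotientAddGroup.map _ _
    (LinearMap.rTensor M f.toAddMonoidHom.toIntLinearMap).toAddMonoidHom
    (by
      rw [balancedRel, AddSubgroup.closure_le]
      rintro x ⟨a, r, m, rfl⟩
      simp only [SetLike.mem_coe, AddSubgroup.mem_comap, map_sub,
        LinearMap.toAddMonoidHom_coe, LinearMap.rTensor_tmul,
        AddMonoidHom.coe_toIntLinearMap, LinearMap.toAddMonoidHom_coe]
      refine AddSubgroup.subset_closure ⟨f a, r, m, ?_⟩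
      rw [map_smul])

/-- A left `R`-module `M` is flat if tensoring any injective map of right `R`-modules
with `M` yields an injective map. -/
def IsFlatModule (M : Type u) [AddCommGroup M] [Module R M] : Prop :=
  ∀ (A B : Type u) [AddCommGroup A] [Module Rᵐᵒᵖ A] [AddCommGroup B] [Module Rᵐᵒᵖ B]
    (f : A →ₗ[Rᵐᵒᵖ] B), Function.Injective f → Function.Injective (tensorMap R M f)

/-- A class `K` of left `R`-modules is `c`-categorical if it contains a module of
cardinality `c` and any two modules in `K` of cardinality `c` are isomorphic. -/
def Categorical (K : ModuleCat.{u} R → Prop) (c : Cardinal.{u}) : Prop :=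
  (∃ M : ModuleCat.{u} R, K M ∧ #M = c) ∧
    ∀ M N : ModuleCat.{u} R, K M → K N → #M = c → #N = c → Nonempty (M ≃ₗ[R] N)

/-!
A module is flat iff it satisfies the equational criterion: every linear relation between its
elements is trivial. Let the flat modules be categorical in `c`, and let `F` be free of rank `c`.
If `P` is flat of cardinality at most `c`, then `P × F` and `F` are flat of cardinality `c`, hence
isomorphic, so `P` is projective.

A Löwenheim–Skolem closure argument puts every element of a flat module `Q` into a submodule `P` of
cardinality at most `c` such that `P ∩ I Q = I P` for each finitely generated right ideal `I`. Then
`Q ⧸ P` is flat, hence `P` is flat, hence projective. Lifting such a submodule `P` of a flat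
quotient `M ⧸ N` back to `M` gives a complement of `N` in its preimage, so by Zorn's lemma every
flat module is a direct sum of projective submodules.
-/

section

open MulOpposite (op unop)

variable {R}

section TrivialRelation

variable {ι B C M N : Type*} [Fintype ι] [AddCommGroup B] [Module Rᵐᵒᵖ B] [AddCommGroup C]
  [Module Rᵐᵒᵖ C] [AddCommGroup M] [Module R M] [AddCommGroup N] [Module R N]

variable (R) in
/-- The relation `∑ bᵢ ⊗ mᵢ = 0` between families in a right module `B` and a left module `M` is
trivial if it holds for formal reasons: `m = a y` and `b a = 0` for some matrix `a` over `R` and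
some finite family `y` in `M`. -/
def IsTrivialRelation (b : ι → B) (m : ι → M) : Prop :=
  ∃ (κ : Type) (_ : Fintype κ) (a : ι → κ → R) (y : κ → M),
    (∀ i, m i = ∑ j, a i j • y j) ∧ ∀ j, ∑ i, op (a i j) • b i = 0

namespace IsTrivialRelation

variable {b : ι → B} {m m' : ι → M}

theorem of_smul {a : ι → R} (ha : ∑ i, op (a i) • b i = 0) (y : M) :
    IsTrivialRelation R b fun i => a i • y :=
  ⟨Unit, inferInstance, fun i _ => a i, fun _ => y, by simp, fun _ => ha⟩

theorem zero : IsTrivialRelation R b (0 : ι → M) :=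
  ⟨Empty, inferInstance, fun _ => Empty.elim, Empty.elim, by simp, fun j => j.elim⟩

theorem add (h : IsTrivialRelation R b m) (h' : IsTrivialRelation R b m') :
    IsTrivialRelation R b (m + m') := by
  obtain ⟨κ, _, a, y, hm, hb⟩ := h
  obtain ⟨κ', _, a', y', hm', hb'⟩ := h'
  refine ⟨κ ⊕ κ', inferInstance, fun i => Sum.elim (a i) (a' i), Sum.elim y y',
    fun i => by simp [hm, hm'], ?_⟩
  rintro (j | j)
  exacts [hb j, hb' j]

theorem sum {X : Type*} {T : Finset X} {m : X → ι → M}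
    (h : ∀ x ∈ T, IsTrivialRelation R b (m x)) : IsTrivialRelation R b (∑ x ∈ T, m x) :=
  Finset.sum_induction _ _ (fun _ _ => add) zero h

theorem zero_left (m : ι → M) : IsTrivialRelation R (0 : ι → B) m := by
  classical
  have hm : m = ∑ k, fun i => (if i = k then 1 else 0 : R) • m k := by ext; simp
  rw [hm]
  exact sum fun k _ => of_smul (by simp) _

theorem map_right (h : IsTrivialRelation R b m) (g : M →ₗ[R] N) :
    IsTrivialRelation R b fun i => g (m i) := by
  obtain ⟨κ, _, a, y, hm, hb⟩ := h
  exact ⟨κ, inferInstance, a, fun j => g (y j), fun i => by simp [hm], hb⟩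

theorem of_injective_left {f : B →ₗ[Rᵐᵒᵖ] C} (hf : Function.Injective f)
    (h : IsTrivialRelation R (fun i => f (b i)) m) : IsTrivialRelation R b m := by
  obtain ⟨κ, _, a, y, hm, hb⟩ := h
  exact ⟨κ, inferInstance, a, y, hm, fun j => hf (by simpa using hb j)⟩

theorem op_smul {r : ι → R} (h : IsTrivialRelation R r m) (v : B) :
    IsTrivialRelation R (fun i => op (r i) • v) m := by
  obtain ⟨κ, _, a, y, hm, hr⟩ := h
  refine ⟨κ, inferInstance, a, y, hm, fun j => ?_⟩
  have hr : ∑ i, r i * a i j = 0 := by simpa using hr j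
  simp only [smul_smul, ← MulOpposite.op_mul]
  rw [← Finset.sum_smul, ← Finset.op_sum, hr, MulOpposite.op_zero, zero_smul]

theorem of_matrix {κ : Type*} [Fintype κ] {a : ι → κ → R} {y : κ → M}
    (hm : ∀ i, m i = ∑ j, a i j • y j)
    (h : IsTrivialRelation R (fun j => ∑ i, op (a i j) • b i) y) : IsTrivialRelation R b m := by
  obtain ⟨κ', _, c, z, hy, hb⟩ := h
  refine ⟨κ', inferInstance, fun i k => ∑ j, a i j * c j k, z, fun i => ?_, fun k => ?_⟩
  · simp only [hm, hy, Finset.smul_sum, Finset.sum_smul, mul_smul]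
    exact Finset.sum_comm
  · rw [← hb k]
    simp only [Finset.op_sum, MulOpposite.op_mul, Finset.smul_sum, Finset.sum_smul, mul_smul]
    exact Finset.sum_comm

theorem of_comp_equiv {ι' : Type*} [Fintype ι'] (e : ι' ≃ ι)
    (h : IsTrivialRelation R (b ∘ e) (m ∘ e)) : IsTrivialRelation R b m := by
  obtain ⟨κ, _, a, y, hm, hb⟩ := h
  refine ⟨κ, inferInstance, fun i => a (e.symm i), y, fun i => by simpa using hm (e.symm i),
    fun j => ?_⟩
  rw [← hb j, ← e.sum_comp]
  simp

theorem of_sumElim_zero {ι' : Type*} [Fintype ι'] {y : ι' → M}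
    (h : IsTrivialRelation R (Sum.elim b 0) (Sum.elim m y)) : IsTrivialRelation R b m := by
  obtain ⟨κ, _, a, z, hm, hb⟩ := h
  exact ⟨κ, inferInstance, fun i => a (.inl i), z, fun i => hm (.inl i),
    fun j => by simpa using hb j⟩

end IsTrivialRelation

end TrivialRelation

section EquationallyFlat

variable {M N : Type*} [AddCommGroup M] [Module R M] [AddCommGroup N] [Module R N]

variable (R M) in
/-- The equational criterion for flatness: every linear relation `∑ rᵢ mᵢ = 0` in `M` is trivial. -/
def EquationallyFlat : Prop :=
  ∀ (n : ℕ) (r : Fin n → R) (m : Fin n → M), ∑ i, r i • m i = 0 → IsTrivialRelation R r m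

namespace EquationallyFlat

theorem isTrivialRelation (hM : EquationallyFlat R M) {ι : Type*} [Fintype ι] {r : ι → R}
    {m : ι → M} (h : ∑ i, r i • m i = 0) : IsTrivialRelation R r m := by
  let e := (Fintype.equivFin ι).symm
  exact .of_comp_equiv e <| hM _ _ _ <| (e.sum_comp fun i => r i • m i).trans h

theorem isTrivialRelation_op_smul_add (hM : EquationallyFlat R M) {ι B : Type*} [Fintype ι]
    [AddCommGroup B] [Module Rᵐᵒᵖ B] {r : ι → R} {b : ι → B} {m : ι → M}
    (hr : ∑ i, r i • m i = 0) (hb : IsTrivialRelation R b m) (v : B) :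
    IsTrivialRelation R (fun i => op (r i) • v + b i) m := by
  obtain ⟨κ, _, a, y, hm, hba⟩ := hb
  have hra : ∑ j, (∑ i, r i * a i j) • y j = 0 := by
    rw [← hr]
    simp only [hm, Finset.smul_sum, Finset.sum_smul, mul_smul]
    exact Finset.sum_comm
  refine .of_matrix hm ?_
  convert (hM.isTrivialRelation hra).op_smul v using 2 with j
  simp only [smul_add, Finset.sum_add_distrib, hba, add_zero, Finset.op_sum,
    MulOpposite.op_mul, Finset.sum_smul, mul_smul]

-- The equations `∑ᵢ cᵢₓ mᵢ = 0` are trivialised one at a time: a matrix that trivialises some of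
-- them turns the next one into a relation between the elements of a new family.
theorem isTrivialRelation_sum_op_smul (hM : EquationallyFlat R M) {ι X B : Type*} [Fintype ι]
    [AddCommGroup B] [Module Rᵐᵒᵖ B] {T : Finset X} {c : ι → X → R} {m : ι → M}
    (h : ∀ x ∈ T, ∑ i, c i x • m i = 0) (v : X → B) :
    IsTrivialRelation R (fun i => ∑ x ∈ T, op (c i x) • v x) m := by
  classical
  induction T using Finset.induction_on with
  | empty => exact .zero_left m
  | insert x T hx ih =>
    rw [Finset.forall_mem_insert] at h
    simpa only [Finset.sum_insert hx] using hM.isTrivialRelation_op_smul_add h.1 (ih h.2) (v x)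

theorem prod (hM : EquationallyFlat R M) (hN : EquationallyFlat R N) :
    EquationallyFlat R (M × N) := by
  intro n r m h
  rw [Prod.ext_iff, Prod.fst_sum, Prod.snd_sum] at h
  convert ((hM n r _ h.1).map_right (LinearMap.inl R M N)).add
    ((hN n r _ h.2).map_right (LinearMap.inr R M N)) using 1
  ext i <;> simp

theorem of_equiv (hM : EquationallyFlat R M) (e : M ≃ₗ[R] N) : EquationallyFlat R N := by
  intro n r m h
  have h' : ∑ i, r i • e.symm (m i) = 0 := by simpa using congrArg e.symm h
  simpa using (hM n r _ h').map_right e.toLinearMap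

end EquationallyFlat

theorem equationallyFlat_finsupp (I : Type*) : EquationallyFlat R (I →₀ R) := by
  classical
  intro n r m h
  let T : Finset I := Finset.univ.biUnion fun i => (m i).support
  have hm : m = ∑ t ∈ T, fun i => m i t • Finsupp.single t (1 : R) := by
    ext1 i
    have hT : (m i).support ⊆ T :=
      Finset.subset_biUnion_of_mem (fun i => (m i).support) (Finset.mem_univ i)
    rw [Finset.sum_apply]
    simpa using ((m i).sum_single.symm.trans (Finsupp.sum_of_support_subset _ hT _ (by simp)))
  rw [hm]
  refine .sum fun t _ => .of_smul ?_ _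
  simpa [Finsupp.finsetSum_apply] using DFunLike.congr_fun h t

end EquationallyFlat

section BalancedTensor

variable {A B M : Type u} [AddCommGroup A] [Module Rᵐᵒᵖ A] [AddCommGroup B] [Module Rᵐᵒᵖ B]
  [AddCommGroup M] [Module R M]

theorem isFlatModule_iff : IsFlatModule R M ↔
    ∀ (A B : Type u) [AddCommGroup A] [Module Rᵐᵒᵖ A] [AddCommGroup B] [Module Rᵐᵒᵖ B]
      (f : A →ₗ[Rᵐᵒᵖ] B), Function.Injective f → ∀ x : A ⊗[ℤ] M,
        LinearMap.rTensor M f.toAddMonoidHom.toIntLinearMap x ∈ balancedRel R B M →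
          x ∈ balancedRel R A M := by
  have injective_iff (A B : Type u) [AddCommGroup A] [Module Rᵐᵒᵖ A] [AddCommGroup B]
      [Module Rᵐᵒᵖ B] (f : A →ₗ[Rᵐᵒᵖ] B) : Function.Injective (tensorMap R M f) ↔
      ∀ x : A ⊗[ℤ] M, LinearMap.rTensor M f.toAddMonoidHom.toIntLinearMap x ∈ balancedRel R B M →
        x ∈ balancedRel R A M := by
    have hmk : Function.Surjective (QuotientAddGroup.mk : A ⊗[ℤ] M → BalancedTensor R A M) :=
      QuotientAddGroup.mk_surjective
    rw [injective_iff_map_eq_zero]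
    exact hmk.forall.trans <| forall_congr' fun x => imp_congr (QuotientAddGroup.eq_zero_iff _)
      (QuotientAddGroup.eq_zero_iff x)
  simp only [IsFlatModule, injective_iff]

theorem op_smul_tmul_sub_tmul_smul_mem (b : B) (r : R) (m : M) :
    (op r • b) ⊗ₜ[ℤ] m - b ⊗ₜ[ℤ] (r • m) ∈ balancedRel R B M :=
  AddSubgroup.subset_closure ⟨b, r, m, rfl⟩

theorem IsTrivialRelation.sum_tmul_mem {ι : Type*} [Fintype ι] {b : ι → B} {m : ι → M}
    (h : IsTrivialRelation R b m) : ∑ i, b i ⊗ₜ[ℤ] m i ∈ balancedRel R B M := by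
  obtain ⟨κ, _, a, y, hm, hb⟩ := h
  have hzero : ∑ i, ∑ j, (op (a i j) • b i) ⊗ₜ[ℤ] y j = 0 := by
    rw [Finset.sum_comm]
    simp only [← TensorProduct.sum_tmul, hb, TensorProduct.zero_tmul, Finset.sum_const_zero]
  have hsum : ∑ i, b i ⊗ₜ[ℤ] m i =
      -∑ i, ∑ j, ((op (a i j) • b i) ⊗ₜ[ℤ] y j - b i ⊗ₜ[ℤ] (a i j • y j)) := by
    simp only [Finset.sum_sub_distrib, hzero, zero_sub, neg_neg, ← TensorProduct.tmul_sum, ← hm]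
  rw [hsum]
  exact neg_mem (sum_mem fun i _ => sum_mem fun j _ => op_smul_tmul_sub_tmul_smul_mem _ _ _)

theorem sum_tmul_mem_balancedRel_self {ι : Type*} [Fintype ι] {r : ι → R} {m : ι → M}
    (h : ∑ i, r i • m i = 0) : ∑ i, r i ⊗ₜ[ℤ] m i ∈ balancedRel R R M := by
  have hsum : ∑ i, r i ⊗ₜ[ℤ] m i =
      ∑ i, ((op (r i) • (1 : R)) ⊗ₜ[ℤ] m i - 1 ⊗ₜ[ℤ] (r i • m i)) := by
    rw [Finset.sum_sub_distrib, ← TensorProduct.tmul_sum, h]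
    simp
  rw [hsum]
  exact sum_mem fun i _ => op_smul_tmul_sub_tmul_smul_mem _ _ _

variable (M) in
/-- The map `B ⊗[ℤ] M → M`, `b ⊗ m ↦ φ b • m`, which a functional `φ` on the right module `B`
induces; it detects the coordinates of a relation when `B` is free. -/
noncomputable def functionalTensor (φ : B →ₗ[Rᵐᵒᵖ] R) : B ⊗[ℤ] M →+ M :=
  TensorProduct.liftAddHom ((smulAddHom R M).comp φ.toAddMonoidHom)
    fun r b m => by simp [mul_smul, Int.cast_smul_eq_zsmul, smul_comm (φ b)]

@[simp]
theorem functionalTensor_tmul (φ : B →ₗ[Rᵐᵒᵖ] R) (b : B) (m : M) :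
    functionalTensor M φ (b ⊗ₜ[ℤ] m) = φ b • m :=
  rfl

theorem functionalTensor_eq_zero (φ : B →ₗ[Rᵐᵒᵖ] R) {x : B ⊗[ℤ] M}
    (hx : x ∈ balancedRel R B M) : functionalTensor M φ x = 0 := by
  suffices h : balancedRel R B M ≤ (functionalTensor M φ).ker from h hx
  rw [balancedRel, AddSubgroup.closure_le]
  rintro _ ⟨b, r, m, rfl⟩
  simp [mul_smul]

theorem balancedRel_le_map {f : A →ₗ[Rᵐᵒᵖ] B} (hf : Function.Surjective f) :
    balancedRel R B M ≤ (balancedRel R A M).map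
      (LinearMap.rTensor M f.toAddMonoidHom.toIntLinearMap).toAddMonoidHom := by
  rw [balancedRel, AddSubgroup.closure_le]
  rintro _ ⟨b, r, m, rfl⟩
  obtain ⟨a, rfl⟩ := hf b
  exact ⟨_, op_smul_tmul_sub_tmul_smul_mem a r m, by simp⟩

theorem exists_add_sum_tmul_mem_of_rTensor_mem {f : A →ₗ[Rᵐᵒᵖ] B} (hf : Function.Surjective f)
    {x : A ⊗[ℤ] M}
    (hx : LinearMap.rTensor M f.toAddMonoidHom.toIntLinearMap x ∈ balancedRel R B M) :
    ∃ (n : ℕ) (k : Fin n → A) (y : Fin n → M), (∀ j, f (k j) = 0) ∧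
      x + ∑ j, k j ⊗ₜ[ℤ] y j ∈ balancedRel R A M := by
  obtain ⟨x', hx', hxx'⟩ := balancedRel_le_map hf hx
  let g := f.toAddMonoidHom.toIntLinearMap
  have hker : LinearMap.rTensor M g (x' - x) = 0 := by
    rw [map_sub, sub_eq_zero]
    exact hxx'
  obtain ⟨t, ht⟩ := (rTensor_exact M g.exact_subtype_ker_map hf (x' - x)).1 hker
  obtain ⟨n, k, y, rfl⟩ := TensorProduct.exists_sum_tmul_eq t
  refine ⟨n, fun j => k j, y, fun j => (k j).2, ?_⟩
  have hsum : ∑ j, (k j : A) ⊗ₜ[ℤ] y j = x' - x := by simpa using ht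
  rwa [hsum, add_sub_cancel]

theorem EquationallyFlat.isTrivialRelation_of_sum_tmul_mem (hM : EquationallyFlat R M) {ι : Type*}
    [Fintype ι] {b : ι → B} {m : ι → M} (h : ∑ i, b i ⊗ₜ[ℤ] m i ∈ balancedRel R B M) :
    IsTrivialRelation R b m := by
  classical
  let π : (B →₀ Rᵐᵒᵖ) →ₗ[Rᵐᵒᵖ] B := Finsupp.linearCombination Rᵐᵒᵖ id
  obtain ⟨n, k, y, hk, hky⟩ := exists_add_sum_tmul_mem_of_rTensor_mem (f := π)
    (Finsupp.linearCombination_id_surjective Rᵐᵒᵖ B)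
    (x := ∑ i, Finsupp.single (b i) 1 ⊗ₜ[ℤ] m i) (by simpa [π] using h)
  let K : ι ⊕ Fin n → B →₀ Rᵐᵒᵖ := Sum.elim (fun i => Finsupp.single (b i) 1) k
  let T : Finset B := Finset.univ.biUnion fun i => (K i).support
  have hcoord (x : B) : ∑ i, unop (K i x) • Sum.elim m y i = 0 := by
    simpa [K] using functionalTensor_eq_zero
      ((LinearMap.toSpanSingleton Rᵐᵒᵖ R 1).comp (Finsupp.lapply x)) hky
  have hπK (i) : ∑ x ∈ T, op (unop (K i x)) • x = Sum.elim b 0 i := by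
    have hT : (K i).support ⊆ T :=
      Finset.subset_biUnion_of_mem (fun i => (K i).support) (Finset.mem_univ i)
    have hπ : π (K i) = Sum.elim b 0 i := by cases i <;> simp [K, π, hk]
    rw [← hπ, Finsupp.linearCombination_apply, Finsupp.sum_of_support_subset _ hT _ (by simp)]
    rfl
  refine .of_sumElim_zero (y := y) ?_
  simpa only [id, hπK] using hM.isTrivialRelation_sum_op_smul (T := T) (fun x _ => hcoord x) id

theorem EquationallyFlat.isFlatModule (hM : EquationallyFlat R M) : IsFlatModule R M := by
  rw [isFlatModule_iff]
  intro A B _ _ _ _ f hf x hx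
  obtain ⟨n, a, m, rfl⟩ := TensorProduct.exists_sum_tmul_eq x
  have hfa : ∑ i, f (a i) ⊗ₜ[ℤ] m i ∈ balancedRel R B M := by simpa using hx
  exact ((hM.isTrivialRelation_of_sum_tmul_mem hfa).of_injective_left hf).sum_tmul_mem

theorem IsFlatModule.equationallyFlat (hM : IsFlatModule R M) : EquationallyFlat R M := by
  classical
  intro n r m h
  let φ : (Fin n → Rᵐᵒᵖ) →ₗ[Rᵐᵒᵖ] R := Fintype.linearCombination Rᵐᵒᵖ r
  let e (i : Fin n) : Fin n → Rᵐᵒᵖ := Pi.single i 1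
  have hφe (i) : φ (e i) = r i := by simp [φ, e, Fintype.linearCombination_apply_single]
  obtain ⟨n', k, y, hk, hky⟩ := exists_add_sum_tmul_mem_of_rTensor_mem
    φ.surjective_rangeRestrict (x := ∑ i, e i ⊗ₜ[ℤ] m i) <|
      isFlatModule_iff.1 hM _ _ (LinearMap.range φ).subtype (Submodule.injective_subtype _) _
        (by simpa [hφe] using sum_tmul_mem_balancedRel_self h)
  have hm (i : Fin n) : m i = ∑ j, (-unop (k j i)) • y j := by
    have hi : m i + ∑ j, unop (k j i) • y j = 0 := by
      simpa [e, Pi.single_apply] using functionalTensor_eq_zero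
        ((LinearMap.toSpanSingleton Rᵐᵒᵖ R 1).comp (LinearMap.proj i)) hky
    simpa using eq_neg_of_add_eq_zero_left hi
  refine ⟨Fin n', inferInstance, _, y, hm, fun j => ?_⟩
  have hφk : φ (k j) = 0 := congrArg Subtype.val (hk j)
  simpa [φ, Fintype.linearCombination_apply] using hφk

end BalancedTensor

section IdealPure

variable {Q : Type*} [AddCommGroup Q] [Module R Q]

theorem sum_smul_mkQ_eq_zero_iff {ι : Type*} [Fintype ι] {P : Submodule R Q} {r : ι → R}
    {x : ι → Q} : ∑ i, r i • P.mkQ (x i) = 0 ↔ ∑ i, r i • x i ∈ P := by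
  simp only [← map_smul, ← map_sum, ← LinearMap.mem_ker, P.ker_mkQ]

/-- A submodule `P ≤ Q` is pure with respect to finitely generated right ideals if
`P ∩ I Q = I P` for each such ideal `I`: an equation `∑ rᵢ xᵢ = p` with `p ∈ P` which is solvable
in `Q` is solvable in `P`. For flat `Q` this makes the quotient `Q ⧸ P` flat. -/
def IsIdealPure (P : Submodule R Q) : Prop :=
  ∀ (n : ℕ) (r : Fin n → R) (x : Fin n → Q), ∑ i, r i • x i ∈ P →
    ∃ p : Fin n → P, ∑ i, r i • (p i : Q) = ∑ i, r i • x i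

end IdealPure

section CardinalityBounds

theorem exists_closed_superset_mk_le {J X : Type u} (f : J → X → X → X) (s : Set X) :
    ∃ t : Set X, s ⊆ t ∧ (∀ j, ∀ x ∈ t, ∀ y ∈ t, f j x y ∈ t) ∧ #t ≤ max ℵ₀ (#s + #J) := by
  let L : FirstOrder.Language.{u, 0} := ⟨fun n => {_j : J // n = 2}, fun _ => Empty⟩
  let _ : L.Structure X :=
    { funMap := fun {_} g x => f g.1 (x ⟨0, by simp [g.2]⟩) (x ⟨1, by simp [g.2]⟩)
      RelMap := fun g => g.elim }
  let t := FirstOrder.Language.Substructure.closure L s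
  have hJ : #(Σ n, L.Functions n) ≤ #J :=
    mk_le_of_injective (f := fun g => g.2.1) <| by rintro ⟨_, _, rfl⟩ ⟨_, _, rfl⟩ rfl; rfl
  refine ⟨t, FirstOrder.Language.Substructure.subset_closure, fun j x hx y hy => ?_, ?_⟩
  · exact t.fun_mem (n := 2) ⟨j, rfl⟩ ![x, y] (Fin.forall_fin_two.2 ⟨hx, hy⟩)
  · have hcard : #t ≤ max ℵ₀ (#s + #(Σ n, L.Functions n)) := by
      simpa only [Cardinal.lift_id] using
        FirstOrder.Language.Substructure.lift_card_closure_le (L := L) (s := s)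
    exact hcard.trans (by gcongr)

variable {Q : Type u} [AddCommGroup Q] [Module R Q] {κ : Cardinal.{u}}

theorem exists_invariant_submodule_mk_le {J : Type u} (f : J → Q → Q) (hκ : ℵ₀ ≤ κ) (hR : #R ≤ κ)
    (hJ : #J ≤ κ) (q : Q) :
    ∃ P : Submodule R Q, q ∈ P ∧ (∀ j, ∀ p ∈ P, f j p ∈ P) ∧ #P ≤ κ := by
  let operation : Option (R ⊕ J) → Q → Q → Q
    | none, x, y => x + y
    | some (.inl r), x, _ => r • x
    | some (.inr j), x, _ => f j x
  obtain ⟨t, hqt, ht, htκ⟩ := exists_closed_superset_mk_le operation {q}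
  rw [Set.singleton_subset_iff] at hqt
  refine ⟨⟨⟨⟨t, fun hx hy => ht none _ hx _ hy⟩, ?_⟩, fun r x hx => ht (some (.inl r)) x hx x hx⟩,
    hqt, fun j p hp => ht (some (.inr j)) p hp p hp, htκ.trans ?_⟩
  · simpa [operation] using ht (some (.inl 0)) q hqt q hqt
  · have h1 : 1 ≤ κ := one_le_aleph0.trans hκ
    rw [mk_singleton, mk_option, mk_sum, lift_id, lift_id]
    exact max_le hκ (add_le_of_le hκ h1 (add_le_of_le hκ (add_le_of_le hκ hR hJ) h1))

theorem exists_isIdealPure_mk_le (hκ : ℵ₀ ≤ κ) (hR : #R ≤ κ) (q : Q) :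
    ∃ P : Submodule R Q, q ∈ P ∧ IsIdealPure P ∧ #P ≤ κ := by
  have exists_solution (d : Σ n, Fin n → R) (p : Q) : ∃ x : ℕ → Q,
      (∃ x' : Fin d.1 → Q, ∑ i, d.2 i • x' i = p) → ∑ i, d.2 i • x i = p := by
    by_cases h : ∃ x' : Fin d.1 → Q, ∑ i, d.2 i • x' i = p
    · obtain ⟨x', hx'⟩ := h
      exact ⟨Function.extend Fin.val x' 0, fun _ => by simp [Fin.val_injective.extend_apply, hx']⟩
    · exact ⟨0, fun h' => absurd h' h⟩
  choose solution hsolution using exists_solution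
  have hJ : #((Σ n, Fin n → R) × ℕ) ≤ κ := by
    have hlist : #(Σ n, Fin n → R) ≤ κ := by
      rw [← mk_congr List.equivSigmaTuple]
      exact (mk_list_le_max R).trans (max_le hκ hR)
    rw [mk_prod, lift_uzero, mk_nat, lift_aleph0]
    exact mul_le_of_le hκ hlist hκ
  obtain ⟨P, hqP, hP, hPκ⟩ := exists_invariant_submodule_mk_le
    (fun (j : (Σ n, Fin n → R) × ℕ) p => solution j.1 p j.2) hκ hR hJ q
  refine ⟨P, hqP, fun n r x hx => ?_, hPκ⟩
  exact ⟨fun i => ⟨solution ⟨n, r⟩ _ i, hP (⟨n, r⟩, i) _ hx⟩, hsolution ⟨n, r⟩ _ ⟨x, rfl⟩⟩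

end CardinalityBounds

namespace EquationallyFlat

variable {Q : Type*} [AddCommGroup Q] [Module R Q] {P : Submodule R Q}

theorem quotient (hQ : EquationallyFlat R Q) (hP : IsIdealPure P) :
    EquationallyFlat R (Q ⧸ P) := by
  intro n r m h
  obtain ⟨x, rfl⟩ := P.mkQ_surjective.comp_left m
  obtain ⟨p, hp⟩ := hP n r x (sum_smul_mkQ_eq_zero_iff.1 h)
  have hxp : ∑ i, r i • (x i - p i) = 0 := by
    simp only [smul_sub, Finset.sum_sub_distrib, hp, sub_self]
  simpa [(Submodule.Quotient.mk_eq_zero P).2, Function.comp_def] using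
    (hQ n r _ hxp).map_right P.mkQ

-- Trivialise the relation in `Q`, say by `a` and `y`, and then the relations `a y = 0` in `Q ⧸ P`:
-- this corrects `y` to a family in `P`.
theorem submodule (hQ : EquationallyFlat R Q) (hQP : EquationallyFlat R (Q ⧸ P)) :
    EquationallyFlat R P := by
  classical
  intro n r p h
  have h' : ∑ i, r i • (p i : Q) = 0 := by simpa using congrArg P.subtype h
  obtain ⟨κ, _, a, y, hp, hra⟩ := hQ n r _ h'
  have hay (i : Fin n) : ∑ j, a i j • P.mkQ (y j) = 0 :=
    sum_smul_mkQ_eq_zero_iff.2 (hp i ▸ (p i).2)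
  obtain ⟨κ', _, c, z, hyz, hac⟩ := hQP.isTrivialRelation_sum_op_smul (T := Finset.univ)
    (c := fun j i => a i j) (fun i _ => hay i) fun i => (Pi.single i 1 : Fin n → R)
  obtain ⟨z, rfl⟩ := P.mkQ_surjective.comp_left z
  have hac (i k) : ∑ j, a i j * c j k = 0 := by
    simpa [Finset.sum_apply, Pi.single_apply] using congrFun (hac k) i
  have hmem (j) : y j - ∑ k, c j k • z k ∈ P := by
    rw [← P.ker_mkQ, LinearMap.mem_ker, map_sub, sub_eq_zero]
    simpa using hyz j
  refine ⟨κ, inferInstance, a, fun j => ⟨_, hmem j⟩, fun i => Subtype.ext ?_, hra⟩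
  have hz : ∑ j, a i j • ∑ k, c j k • z k = 0 := by
    simp only [Finset.smul_sum, ← mul_smul]
    rw [Finset.sum_comm]
    simp only [← Finset.sum_smul, hac, zero_smul, Finset.sum_const_zero]
  simp [smul_sub, hz, hp]

theorem quotient_sSup {S : Set (Submodule R Q)} (hS : S.Nonempty) (hdir : DirectedOn (· ≤ ·) S)
    (h : ∀ P ∈ S, EquationallyFlat R (Q ⧸ P)) : EquationallyFlat R (Q ⧸ sSup S) := by
  intro n r m hm
  obtain ⟨x, rfl⟩ := (sSup S).mkQ_surjective.comp_left m
  obtain ⟨P, hPS, hxP⟩ :=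
    (Submodule.mem_sSup_of_directed hS hdir).1 (sum_smul_mkQ_eq_zero_iff.1 hm)
  exact (h P hPS n r _ (sum_smul_mkQ_eq_zero_iff.2 hxP)).map_right
    (P.mapQ (sSup S) LinearMap.id (le_sSup hPS))

end EquationallyFlat

theorem sSupIndep_insert {α : Type*} [CompleteLattice α] [IsModularLattice α] {S : Set α} {a : α}
    (hS : sSupIndep S) (ha : Disjoint a (sSup S)) : sSupIndep (insert a S) := by
  rintro x (rfl | hx)
  · exact ha.mono_right (sSup_le_sSup (by simp [Set.insert_sdiff_of_mem]))
  · have hle : sSup (insert a S \ {x}) ≤ sSup (S \ {x}) ⊔ a := by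
      rw [sup_comm, ← sSup_insert]
      exact sSup_le_sSup (Set.insert_sdiff_subset ..)
    refine ((hS hx).disjoint_sup_right_of_disjoint_sup_left ?_).mono_right hle
    exact ha.symm.mono_left (sup_le (le_sSup hx) (sSup_le_sSup Set.sdiff_subset))

section PartialDecomposition

variable {M : Type*} [AddCommGroup M] [Module R M]

theorem exists_disjoint_map_mkQ_eq {N : Submodule R M} (P : Submodule R (M ⧸ N))
    [Module.Projective R P] :
    ∃ C : Submodule R M, Module.Projective R C ∧ Disjoint C N ∧ C.map N.mkQ = P := by
  obtain ⟨g, hg⟩ := Module.projective_lifting_property N.mkQ P.subtype N.mkQ_surjective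
  have hgP : Function.Injective (N.mkQ ∘ₗ g) := by rw [hg]; exact P.injective_subtype
  refine ⟨LinearMap.range g,
    .of_equiv (LinearEquiv.ofInjective g (.of_comp (f := N.mkQ) hgP)), ?_, ?_⟩
  · rw [Submodule.disjoint_def]
    rintro _ ⟨p, rfl⟩ hp
    have hp' : N.mkQ (g p) = 0 := (Submodule.Quotient.mk_eq_zero N).2 hp
    rw [hgP (hp'.trans (map_zero _).symm), map_zero]
  · rw [← LinearMap.range_comp, hg, P.range_subtype]

/-- A set `S` of submodules of `M` is a partial decomposition if its members are projective and
independent and the module `M ⧸ sSup S` that remains to be decomposed is flat. -/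
structure IsPartialDecomposition (S : Set (Submodule R M)) : Prop where
  sSupIndep : sSupIndep S
  projective : ∀ P ∈ S, Module.Projective R P
  equationallyFlat : EquationallyFlat R (M ⧸ sSup S)

namespace IsPartialDecomposition

theorem empty (hM : EquationallyFlat R M) : IsPartialDecomposition (∅ : Set (Submodule R M)) where
  sSupIndep := sSupIndep_empty
  projective := by simp
  equationallyFlat := by
    rw [sSup_empty]
    exact hM.of_equiv (Submodule.quotEquivOfEqBot ⊥ rfl).symm

theorem sUnion {c : Set (Set (Submodule R M))} (hne : c.Nonempty) (hc : IsChain (· ⊆ ·) c)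
    (h : ∀ S ∈ c, IsPartialDecomposition S) : IsPartialDecomposition (⋃₀ c) where
  sSupIndep := iSupIndep_sUnion_of_directed hc.directedOn fun S hS => (h S hS).sSupIndep
  projective := fun P ⟨S, hS, hP⟩ => (h S hS).projective P hP
  equationallyFlat := by
    rw [sSup_sUnion, ← sSup_image]
    refine .quotient_sSup (hne.image _) ?_ ?_
    · exact directedOn_image.2 (hc.directedOn.mono fun _ _ h => sSup_le_sSup h)
    · rintro _ ⟨S, hS, rfl⟩
      exact (h S hS).equationallyFlat

variable {S : Set (Submodule R M)}

theorem insert_of_disjoint (h : IsPartialDecomposition S) {C : Submodule R M}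
    [hC : Module.Projective R C] (hCS : Disjoint C (sSup S))
    (hflat : EquationallyFlat R ((M ⧸ sSup S) ⧸ C.map (sSup S).mkQ)) :
    IsPartialDecomposition (insert C S) where
  sSupIndep := sSupIndep_insert h.sSupIndep hCS
  projective := Set.forall_mem_insert.2 ⟨hC, h.projective⟩
  equationallyFlat := by
    rw [sSup_insert, sup_comm]
    exact hflat.of_equiv (Submodule.quotientQuotientEquivQuotientSup _ _)

theorem projective_of_sSup_eq_top (h : IsPartialDecomposition S) (htop : sSup S = ⊤) :
    Module.Projective R M := by
  classical
  have hinternal := DirectSum.isInternal_submodule_of_iSupIndep_of_iSup_eq_top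
    ((sSupIndep_iff S).1 h.sSupIndep) (sSup_eq_iSup' S ▸ htop)
  have (P : S) : Module.Projective R (P : Submodule R M) := h.projective P P.2
  exact .of_equiv
    (LinearEquiv.ofBijective (DirectSum.coeLinearMap fun P : S => (P : Submodule R M)) hinternal)

end IsPartialDecomposition

end PartialDecomposition

section Categoricity

variable {M : Type u} [AddCommGroup M] [Module R M] {κ c : Cardinal.{u}}

theorem EquationallyFlat.exists_submodule_mk_le (hM : EquationallyFlat R M) (hκ : ℵ₀ ≤ κ)
    (hR : #R ≤ κ) (m : M) : ∃ P : Submodule R M, m ∈ P ∧ #P ≤ κ ∧ EquationallyFlat R P ∧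
      EquationallyFlat R (M ⧸ P) := by
  obtain ⟨P, hmP, hP, hPκ⟩ := exists_isIdealPure_mk_le hκ hR m
  exact ⟨P, hmP, hPκ, hM.submodule (hM.quotient hP), hM.quotient hP⟩

theorem IsPartialDecomposition.exists_ssuperset {S : Set (Submodule R M)}
    (h : IsPartialDecomposition S) (hS : sSup S ≠ ⊤) (hκ : ℵ₀ ≤ κ) (hR : #R ≤ κ)
    (hsmall : ∀ (P : Type u) [AddCommGroup P] [Module R P],
      EquationallyFlat R P → #P ≤ κ → Module.Projective R P) :
    ∃ S', IsPartialDecomposition S' ∧ S ⊂ S' := by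
  obtain ⟨m, hm⟩ := SetLike.exists_not_mem_of_ne_top _ hS rfl
  obtain ⟨P, hmP, hPκ, hP, hquot⟩ :=
    h.equationallyFlat.exists_submodule_mk_le hκ hR ((sSup S).mkQ m)
  have := hsmall P hP hPκ
  obtain ⟨C, _, hCS, rfl⟩ := exists_disjoint_map_mkQ_eq P
  refine ⟨insert C S, h.insert_of_disjoint hCS hquot, Set.ssubset_insert fun hC => hm ?_⟩
  rwa [← Submodule.mem_comap, Submodule.comap_map_mkQ, sup_eq_left.2 (le_sSup hC)] at hmP

theorem EquationallyFlat.projective_of_forall_mk_le (hM : EquationallyFlat R M) (hκ : ℵ₀ ≤ κ)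
    (hR : #R ≤ κ) (hsmall : ∀ (P : Type u) [AddCommGroup P] [Module R P],
      EquationallyFlat R P → #P ≤ κ → Module.Projective R P) : Module.Projective R M := by
  obtain ⟨S, -, hS⟩ := zorn_subset_nonempty {S : Set (Submodule R M) | IsPartialDecomposition S}
    (fun c hcS hc hne => ⟨⋃₀ c, .sUnion hne hc hcS, fun _ => Set.subset_sUnion_of_mem⟩) ∅
    (.empty hM)
  refine hS.prop.projective_of_sSup_eq_top (by_contra fun hne => ?_)
  obtain ⟨S', hS', hSS'⟩ := hS.prop.exists_ssuperset hne hκ hR hsmall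
  exact hS.not_prop_of_gt hSS' hS'

-- Categoricity identifies `P × F` with `F`, for `F` free of rank `c`, so `P` is a summand of `F`.
theorem Categorical.projective_of_mk_le (hcat : Categorical R (fun M => IsFlatModule R M) c)
    (hc : ℵ₀ ≤ c) (hR : #R ≤ c) {P : Type u} [AddCommGroup P] [Module R P]
    (hP : EquationallyFlat R P) (hPc : #P ≤ c) : Module.Projective R P := by
  rcases subsingleton_or_nontrivial R with _ | _
  · have := Module.subsingleton R P
    infer_instance
  let F := c.out →₀ R
  have : Infinite c.out := by rwa [infinite_iff, mk_out]
  have hF : #F = c := by rw [mk_finsupp_of_infinite, mk_out, max_eq_left hR]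
  have hPF : #(P × F) = c := by
    rw [mk_prod, lift_id, lift_id, hF, mul_eq_right hc hPc (mk_ne_zero P)]
  have hflat : EquationallyFlat R F := equationallyFlat_finsupp _
  obtain ⟨e⟩ := hcat.2 (.of R (P × F)) (.of R F) (hP.prod hflat).isFlatModule hflat.isFlatModule
    hPF hF
  have : Module.Projective R (P × F) := .of_equiv (M := F) e.symm
  exact .of_split (LinearMap.inl R P F) (LinearMap.fst R P F) (LinearMap.fst_comp_inl R P F)

end Categoricity

theorem stmt10_general {c : Cardinal.{u}} (hc : #R + ℵ₀ ≤ c)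
    (hcat : Categorical R (fun M => IsFlatModule R M) c) (M : Type u) [AddCommGroup M] [Module R M]
    (hM : IsFlatModule R M) : Module.Projective R M := by
  have hℵ₀ : ℵ₀ ≤ c := (self_le_add_left ..).trans hc
  have hR : #R ≤ c := (self_le_add_right ..).trans hc
  exact hM.equationallyFlat.projective_of_forall_mk_le hℵ₀ hR fun P _ _ =>
    hcat.projective_of_mk_le hℵ₀ hR

end

theorem stmt10
    (h : ∃ c : Cardinal.{u}, #R + ℵ₀ < c ∧
      Categorical R (fun M => IsFlatModule R M) c) :
    (∀ (M : Type u) [AddCommGroup M] [Module R M],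
        (∃ s : Set M, s.Countable ∧ Submodule.span R s = ⊤) →
        IsFlatModule R M → Module.Projective R M) ∧
      ∀ (M : Type u) [AddCommGroup M] [Module R M],
        IsFlatModule R M → Module.Projective R M := by
  obtain ⟨c, hc, hcat⟩ := h
  exact ⟨fun M _ _ _ hM => stmt10_general hc.le hcat M hM,
    fun M _ _ hM => stmt10_general hc.le hcat M hM⟩
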